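/- arXiv:2411.19152 — 2 statements merged into one kernel-verified Lean document; each statement's English description precedes it below -/
import Mathlib

section
/- Let w ∈ ℝ with 0 < |w| ≤ π/2. Then the family (c_n(w))_{n ∈ ℤ} is absolutely summable, i.e. ∑_{n ∈ ℤ} |c_n(w)| < ∞, and for every x ∈ [0,1] one has ∑_{n ∈ ℤ} c_n(w)·e^{i n π x} = e^{i w x}. -/
/-!
The numbers `c_n(w)` are the Fourier coefficients, for period `2`, of the even function
`x ↦ e^{iw|x|}` on `[-1, 1]` (`fourierCoeff_evenExp`). This function takes equal values at `±1`, so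
it descends to a continuous function on the circle `ℝ / 2ℤ`. Since `|w| ≤ π/2`, the denominators
satisfy `(nπ)² - w² ≥ n²` for `n ≠ 0`, so `‖c_n(w)‖ ≤ 2|w| / n²` and the coefficients are absolutely
summable (`summable_norm_cc`). A continuous function on the circle with summable Fourier
coefficients is the pointwise sum of its Fourier series.
-/

open Complex

/-- The Fourier coefficients `c_n(w) = −i·w·((−1)ⁿ e^{iw} − 1)/(w² − (nπ)²)` of the 2-periodic
function equal to `e^{iwx}` on `[0,1]` and to `e^{iw(2−x)}` on `(1,2)`. -/
noncomputable def cc (w : ℝ) (n : ℤ) : ℂ :=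
  -I * (w : ℂ) * ((-1 : ℂ) ^ n * Complex.exp (I * (w : ℂ)) - 1)
    / ((w : ℂ) ^ 2 - ((n : ℂ) * (Real.pi : ℂ)) ^ 2)

instance : Fact ((0 : ℝ) < 2) := ⟨two_pos⟩

lemma int_sq_le (w : ℝ) (hw : |w| ≤ Real.pi / 2) (n : ℤ) (hn : n ≠ 0) :
    (n : ℝ) ^ 2 ≤ (n * Real.pi) ^ 2 - w ^ 2 := by
  have h1 : (1 : ℝ) ≤ (n : ℝ) ^ 2 := by
    have : 1 ≤ n ^ 2 := by have := sq_pos_of_ne_zero hn; omega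
    exact_mod_cast this
  have h2 : w ^ 2 ≤ (Real.pi / 2) ^ 2 := sq_le_sq' (by linarith [abs_le.mp hw]) (abs_le.mp hw).2
  have h3 : (9 : ℝ) ≤ Real.pi ^ 2 := by nlinarith [Real.pi_gt_three]
  nlinarith [mul_nonneg (sub_nonneg.mpr h1) (sq_nonneg Real.pi),
    mul_nonneg (sq_nonneg (n : ℝ)) (sub_nonneg.mpr h3)]

lemma denom_ne_zero (w : ℝ) (hw0 : 0 < |w|) (hw : |w| ≤ Real.pi / 2) (n : ℤ) :
    (w : ℂ) ^ 2 - ((n : ℂ) * (Real.pi : ℂ)) ^ 2 ≠ 0 := by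
  have : w ^ 2 - (n * Real.pi) ^ 2 ≠ 0 := by
    rcases eq_or_ne n 0 with rfl | hn
    · simpa using hw0
    · have h := int_sq_le w hw n hn
      have : (0 : ℝ) < (n : ℝ) ^ 2 := by positivity
      linarith
  exact_mod_cast this

lemma summable_norm_cc (w : ℝ) (hw : |w| ≤ Real.pi / 2) :
    Summable (fun n : ℤ => ‖cc w n‖) := by
  refine Summable.of_norm_bounded_eventually
    ((Real.summable_one_div_int_pow.mpr one_lt_two).mul_left (|w| * 2)) ?_
  filter_upwards [Filter.eventually_cofinite_ne 0] with n hn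
  have h := int_sq_le w hw n hn
  have hn2 : (0 : ℝ) < (n : ℝ) ^ 2 := by positivity
  have hden : (n : ℝ) ^ 2 ≤ ‖(w : ℂ) ^ 2 - ((n : ℂ) * (Real.pi : ℂ)) ^ 2‖ := by
    have : (w : ℂ) ^ 2 - ((n : ℂ) * (Real.pi : ℂ)) ^ 2
        = ((w ^ 2 - (n * Real.pi) ^ 2 : ℝ) : ℂ) := by push_cast; ring
    rw [this, norm_real, Real.norm_eq_abs, abs_sub_comm]
    exact h.trans (le_abs_self _)
  have hnum : ‖(-1 : ℂ) ^ n * Complex.exp (I * (w : ℂ)) - 1‖ ≤ 2 := by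
    refine (norm_sub_le _ _).trans ?_
    rw [norm_mul, mul_comm I, norm_exp_ofReal_mul_I, norm_zpow]
    norm_num
  rw [norm_norm, cc, norm_div, norm_mul, norm_mul, norm_neg, norm_I, one_mul, norm_real,
    Real.norm_eq_abs, mul_one_div]
  gcongr

lemma exp_neg_int_mul_pi (n : ℤ) : Complex.exp (-(n * Real.pi * I)) = (-1 : ℂ) ^ n := by
  rw [show -(n * Real.pi * I) = ((-n : ℤ) : ℂ) * (Real.pi * I) by push_cast; ring,
    Complex.exp_int_mul, Complex.exp_pi_mul_I, zpow_neg, ← inv_zpow]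
  norm_num

/-- The even function `x ↦ e^{iw|x|}`; the `2`-periodic extension of its restriction to
`(-1, 1]` is `e^{iwx}` on `[0, 1]` and `e^{iw(2-x)}` on `(1, 2)`. -/
noncomputable def evenExp (w : ℝ) (x : ℝ) : ℂ := Complex.exp (I * w * (|x| : ℝ))

lemma fourierCoeff_evenExp (w : ℝ) (hw0 : 0 < |w|) (hw : |w| ≤ Real.pi / 2) (n : ℤ) :
    fourierCoeff (AddCircle.liftIoc 2 (-1) (evenExp w)) n = cc w n := by
  have hd := denom_ne_zero w hw0 hw n
  have hfac : (w : ℂ) ^ 2 - ((n : ℂ) * (Real.pi : ℂ)) ^ 2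
      = (w - n * Real.pi) * (w + n * Real.pi) := by ring
  have hm : (w - n * Real.pi : ℂ) ≠ 0 := fun h => hd (by rw [hfac, h, zero_mul])
  have hp : (w + n * Real.pi : ℂ) ≠ 0 := fun h => hd (by rw [hfac, h, mul_zero])
  have hmI : I * (w - n * Real.pi : ℂ) ≠ 0 := mul_ne_zero I_ne_zero hm
  have hpI : -(I * (w + n * Real.pi : ℂ)) ≠ 0 := neg_ne_zero.mpr (mul_ne_zero I_ne_zero hp)
  have hcont : Continuous fun x : ℝ =>
      fourier (-n) (x : AddCircle (2 : ℝ)) • evenExp w x := by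
    unfold evenExp
    simp_rw [fourier_coe_apply]
    fun_prop
  rw [fourierCoeff_eq_intervalIntegral _ _ (-1)]
  have hcongr : ∫ x in (-1 : ℝ)..(-1 + 2),
        fourier (-n) (x : AddCircle (2 : ℝ)) • AddCircle.liftIoc 2 (-1) (evenExp w) x
      = ∫ x in (-1 : ℝ)..(-1 + 2), fourier (-n) (x : AddCircle (2 : ℝ)) • evenExp w x := by
    refine intervalIntegral.integral_congr_ae (MeasureTheory.ae_of_all _ fun x hx => ?_)
    rw [Set.uIoc_of_le (by norm_num)] at hx
    rw [AddCircle.liftIoc_coe_apply hx]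
  have hneg : ∫ x in (-1 : ℝ)..0, fourier (-n) (x : AddCircle (2 : ℝ)) • evenExp w x
      = ∫ x in (-1 : ℝ)..0, Complex.exp (-(I * (w + n * Real.pi : ℂ)) * x) := by
    refine intervalIntegral.integral_congr fun x hx => ?_
    rw [Set.uIcc_of_le (by norm_num)] at hx
    simp only [evenExp, fourier_coe_apply, abs_of_nonpos hx.2, smul_eq_mul, ← Complex.exp_add]
    congr 1
    push_cast
    ring
  have hpos : ∫ x in (0 : ℝ)..1, fourier (-n) (x : AddCircle (2 : ℝ)) • evenExp w x
      = ∫ x in (0 : ℝ)..1, Complex.exp (I * (w - n * Real.pi : ℂ) * x) := by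
    refine intervalIntegral.integral_congr fun x hx => ?_
    rw [Set.uIcc_of_le (by norm_num)] at hx
    simp only [evenExp, fourier_coe_apply, abs_of_nonneg hx.1, smul_eq_mul, ← Complex.exp_add]
    congr 1
    push_cast
    ring
  have e1 : Complex.exp (-(I * (w + n * Real.pi : ℂ)) * ((-1 : ℝ) : ℂ))
      = (-1 : ℂ) ^ n * Complex.exp (I * w) := by
    have h := exp_neg_int_mul_pi (-n)
    rw [zpow_neg, ← inv_zpow, show ((-1 : ℂ))⁻¹ = -1 by norm_num] at h
    rw [← h, ← Complex.exp_add]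
    congr 1
    push_cast
    ring
  have e2 : Complex.exp (I * (w - n * Real.pi : ℂ) * ((1 : ℝ) : ℂ))
      = (-1 : ℂ) ^ n * Complex.exp (I * w) := by
    rw [← exp_neg_int_mul_pi, ← Complex.exp_add]
    congr 1
    push_cast
    ring
  rw [hcongr, show (-1 + 2 : ℝ) = 1 by norm_num,
    ← intervalIntegral.integral_add_adjacent_intervals (b := 0)
      (hcont.intervalIntegrable _ _) (hcont.intervalIntegrable _ _),
    hneg, hpos, integral_exp_mul_complex hpI, integral_exp_mul_complex hmI, e1, e2, cc, hfac]
  simp only [ofReal_zero, mul_zero, Complex.exp_zero, Complex.real_smul]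
  push_cast
  generalize (-1 : ℂ) ^ n * Complex.exp (I * w) = E
  have hI := I_ne_zero
  field_simp
  rw [I_sq]
  ring

/-- For `0 < |w| ≤ π/2`, the Fourier coefficients `c_n(w)` are absolutely summable and the
Fourier series `∑_{n∈ℤ} c_n(w) e^{inπx}` converges to `e^{iwx}` on `[0,1]`. -/
theorem fourier_series_aw (w : ℝ) (hw0 : 0 < |w|) (hw : |w| ≤ Real.pi / 2) :
    Summable (fun n : ℤ => ‖cc w n‖) ∧
    ∀ x ∈ Set.Icc (0:ℝ) 1,
      ∑' n : ℤ, cc w n * Complex.exp (I * (n : ℂ) * (Real.pi : ℂ) * (x : ℂ))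
        = Complex.exp (I * (w : ℂ) * (x : ℂ)) := by
  have hs := summable_norm_cc w hw
  refine ⟨hs, fun x hx => ?_⟩
  have hc : Continuous (AddCircle.liftIoc 2 (-1) (evenExp w)) := by
    refine AddCircle.liftIoc_continuous ?_ ?_
    · norm_num [evenExp]
    · unfold evenExp
      fun_prop
  have hcoeff : fourierCoeff (⟨_, hc⟩ : C(AddCircle (2 : ℝ), ℂ)) = cc w :=
    funext (fourierCoeff_evenExp w hw0 hw)
  have h := has_pointwise_sum_fourier_series_of_summable (f := ⟨_, hc⟩)
    (by rw [hcoeff]; exact hs.of_norm) (x : AddCircle (2 : ℝ))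
  rw [hcoeff, ContinuousMap.coe_mk,
    AddCircle.liftIoc_coe_apply ⟨by linarith [hx.1], by linarith [hx.2]⟩, evenExp,
    abs_of_nonneg hx.1] at h
  rw [← h.tsum_eq]
  refine tsum_congr fun n => ?_
  rw [fourier_coe_apply, smul_eq_mul]
  congr 2
  push_cast
  ring
end

section
/- There exists a constant C > 0 such that for every natural number N ≥ 2 and every w ∈ ℝ with 0 < |w| ≤ π/2, one has sup_{x ∈ [0,1]} |P_{N,w}(x) − e^{iwx}| ≤ C·(log N)/N. -/
/-!
The trigonometric series `∑ c_n(w) e^{inπx}` is the Fourier series of the continuous 2-periodic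
function equal to `e^{iw|x|}` on `[-1, 1]` (`fourierCoeff_evenExt`). For `0 < |w| ≤ π/2` its
coefficients satisfy `|c_n| ≤ 1/n²` for `n ≠ 0` (`norm_cc_le`), so the series converges
absolutely, with sum `e^{iwx}` for `x ∈ [0, 1]` (`hasSum_cc`).

The Cesàro mean therefore differs from `e^{iwx}` by the lost weights `|n|/(N+1)` for `|n| ≤ N`
and by the tail `|n| > N`. The former contribute at most `(2/(N+1)) ∑_{n ≤ N} 1/n`, which is
`O(log N / N)`, and the latter at most `2 ∑_{n > N} 1/n² ≤ 2/N`.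
-/

open Complex

/-- The `N`-th Cesàro mean `P_{N,w}(x) = ∑_{n=−N}^{N} ((N+1−|n|)/(N+1))·c_n(w)·e^{inπx}`. -/
noncomputable def cesaro (N : ℕ) (w : ℝ) (x : ℝ) : ℂ :=
  ∑ n ∈ Finset.Icc (-(N : ℤ)) (N : ℤ),
    ((((N : ℝ) + 1 - |(n : ℝ)|) / ((N : ℝ) + 1) : ℝ) : ℂ) * cc w n *
      Complex.exp (I * (n : ℂ) * (Real.pi : ℂ) * (x : ℂ))

instance fact_zero_lt_two : Fact ((0 : ℝ) < 2) := ⟨two_pos⟩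

/-- The even function `x ↦ e^{iw|x|}` on `(-1, 1]`, extended to the circle of length `2`. -/
noncomputable def evenExt (w : ℝ) : AddCircle (2 : ℝ) → ℂ :=
  AddCircle.liftIoc 2 (-1) fun x : ℝ => Complex.exp (I * (w : ℂ) * ((|x| : ℝ) : ℂ))

/-- Continuity across the gluing point `1 ~ -1` holds because `|-1| = |1|`. -/
lemma evenExt_continuous (w : ℝ) : Continuous (evenExt w) := by
  refine AddCircle.liftIoc_continuous ?_ ?_
  · norm_num
  · fun_prop

lemma evenExt_apply (w : ℝ) {x : ℝ} (hx : x ∈ Set.Ioc (-1 : ℝ) 1) :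
    evenExt w (x : AddCircle (2 : ℝ)) = Complex.exp (I * (w : ℂ) * ((|x| : ℝ) : ℂ)) := by
  refine AddCircle.liftIoc_coe_apply ?_
  norm_num
  exact hx

/-- The hypothesis `|w| ≤ π/2` keeps `w` at distance at least `π/2` from `nπ` for `n ≠ 0`. -/
lemma add_int_mul_pi_ne_zero {w : ℝ} (h0 : 0 < |w|) (h1 : |w| ≤ Real.pi / 2) (n : ℤ) :
    w + n * Real.pi ≠ 0 := by
  intro h
  have hp := Real.pi_pos
  have hw : |w| = |(n : ℝ)| * Real.pi := by
    rw [show w = -(n * Real.pi) by linarith, abs_neg, abs_mul, abs_of_pos hp]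
  rcases eq_or_ne n 0 with rfl | hn
  · simp at hw; simp [hw] at h0
  · have : (1 : ℝ) ≤ |(n : ℝ)| := by exact_mod_cast Int.one_le_abs hn
    nlinarith

lemma fourierCoeff_evenExt {w : ℝ} (h0 : 0 < |w|) (h1 : |w| ≤ Real.pi / 2) (n : ℤ) :
    fourierCoeff (evenExt w) n = cc w n := by
  have hplus : (w : ℂ) + n * (Real.pi : ℂ) ≠ 0 := by
    exact_mod_cast add_int_mul_pi_ne_zero h0 h1 n
  have hminus : (w : ℂ) - n * (Real.pi : ℂ) ≠ 0 := by
    have := add_int_mul_pi_ne_zero h0 h1 (-n)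
    push_cast at this
    rw [neg_mul, ← sub_eq_add_neg] at this
    exact_mod_cast this
  have hexp : Complex.exp (n * (Real.pi * I)) = (-1 : ℂ) ^ n := by
    rw [Complex.exp_int_mul, Complex.exp_pi_mul_I]
  have hexp' : Complex.exp (-(n * (Real.pi * I))) = (-1 : ℂ) ^ n := by
    rw [Complex.exp_neg, hexp, ← inv_zpow, inv_neg, inv_one]
  have hleft : (∫ x in (-1 : ℝ)..0, fourier (-n) (x : AddCircle (2 : ℝ)) • evenExt w x)
      = ∫ x in (-1 : ℝ)..0, Complex.exp (-(I * (w + n * Real.pi)) * x) := by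
    refine intervalIntegral.integral_congr_ae (Filter.Eventually.of_forall fun x hx => ?_)
    rw [Set.uIoc_of_le (by norm_num)] at hx
    rw [evenExt_apply w ⟨hx.1, by linarith [hx.2]⟩, abs_of_nonpos hx.2, fourier_coe_apply,
      smul_eq_mul, ← Complex.exp_add]
    congr 1
    push_cast
    ring
  have hright : (∫ x in (0 : ℝ)..1, fourier (-n) (x : AddCircle (2 : ℝ)) • evenExt w x)
      = ∫ x in (0 : ℝ)..1, Complex.exp (I * (w - n * Real.pi) * x) := by
    refine intervalIntegral.integral_congr_ae (Filter.Eventually.of_forall fun x hx => ?_)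
    rw [Set.uIoc_of_le (by norm_num)] at hx
    rw [evenExt_apply w ⟨by linarith [hx.1], hx.2⟩, abs_of_pos hx.1, fourier_coe_apply,
      smul_eq_mul, ← Complex.exp_add]
    congr 1
    push_cast
    ring
  have hcont : Continuous fun x : ℝ => fourier (-n) (x : AddCircle (2 : ℝ)) • evenExt w x := by
    have hmk : Continuous fun x : ℝ => (x : AddCircle (2 : ℝ)) := AddCircle.continuous_mk' 2
    exact ((fourier (-n)).continuous.comp hmk).smul ((evenExt_continuous w).comp hmk)
  rw [fourierCoeff_eq_intervalIntegral _ n (-1), show (-1 : ℝ) + 2 = 1 by norm_num,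
    ← intervalIntegral.integral_add_adjacent_intervals (hcont.intervalIntegrable (-1) 0)
      (hcont.intervalIntegrable 0 1), hleft, hright,
    integral_exp_mul_complex (neg_ne_zero.2 (mul_ne_zero I_ne_zero hplus)),
    integral_exp_mul_complex (mul_ne_zero I_ne_zero hminus)]
  have e1 : Complex.exp (-(I * (w + n * Real.pi)) * ((-1 : ℝ) : ℂ))
      = (-1 : ℂ) ^ n * Complex.exp (I * w) := by
    rw [← hexp, ← Complex.exp_add]
    congr 1
    push_cast
    ring
  have e2 : Complex.exp (I * (w - n * Real.pi) * ((1 : ℝ) : ℂ))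
      = (-1 : ℂ) ^ n * Complex.exp (I * w) := by
    rw [← hexp', ← Complex.exp_add]
    congr 1
    push_cast
    ring
  rw [e1, e2, cc, show (w : ℂ) ^ 2 - (n * (Real.pi : ℂ)) ^ 2
    = (w + n * Real.pi) * (w - n * Real.pi) by ring]
  simp only [ofReal_zero, mul_zero, Complex.exp_zero, real_smul]
  generalize (-1 : ℂ) ^ n * Complex.exp (I * w) = E
  have hI : I ^ 2 = -1 := I_sq
  push_cast
  field_simp
  rw [hI]
  ring

/-- Only `‖(-1)ⁿ e^{iw} - 1‖ ≤ 2` and `n²π² - w² ≥ (3/4) n²π²` are used; the resulting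
constant is `4 / (3π) ≤ 1`. -/
lemma norm_cc_le {w : ℝ} (h1 : |w| ≤ Real.pi / 2) {n : ℤ} (hn : n ≠ 0) :
    ‖cc w n‖ ≤ 1 / (n : ℝ) ^ 2 := by
  have hp := Real.pi_gt_three
  have hn1 : (1 : ℝ) ≤ (n : ℝ) ^ 2 := by
    rw [one_le_sq_iff_one_le_abs]
    exact_mod_cast Int.one_le_abs hn
  have hw2 : w ^ 2 ≤ (Real.pi / 2) ^ 2 := by
    rw [← sq_abs]; gcongr
  have hden : 3 / 4 * Real.pi ^ 2 * (n : ℝ) ^ 2 ≤ (n * Real.pi) ^ 2 - w ^ 2 := by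
    nlinarith [sq_nonneg Real.pi]
  have hnum : ‖(-1 : ℂ) ^ n * Complex.exp (I * (w : ℂ)) - 1‖ ≤ 2 := by
    refine (norm_sub_le _ _).trans ?_
    rw [norm_mul, norm_zpow, norm_neg, norm_one, one_zpow, mul_comm I,
      Complex.norm_exp_ofReal_mul_I]
    norm_num
  have hd : ‖(w : ℂ) ^ 2 - ((n : ℂ) * (Real.pi : ℂ)) ^ 2‖ = (n * Real.pi) ^ 2 - w ^ 2 := by
    rw [show (w : ℂ) ^ 2 - ((n : ℂ) * (Real.pi : ℂ)) ^ 2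
      = ((w ^ 2 - (n * Real.pi) ^ 2 : ℝ) : ℂ) by push_cast; ring, Complex.norm_real,
      Real.norm_eq_abs, abs_sub_comm, abs_of_nonneg]
    nlinarith
  have hpos : 0 < 3 / 4 * Real.pi ^ 2 * (n : ℝ) ^ 2 := by positivity
  rw [cc, norm_div, hd, norm_mul, norm_mul, norm_neg, norm_I, one_mul, Complex.norm_real,
    Real.norm_eq_abs, div_le_div_iff₀ (by linarith) (by linarith)]
  have : |w| * ‖(-1 : ℂ) ^ n * Complex.exp (I * (w : ℂ)) - 1‖ ≤ Real.pi / 2 * 2 := by gcongr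
  calc |w| * ‖(-1 : ℂ) ^ n * Complex.exp (I * (w : ℂ)) - 1‖ * (n : ℝ) ^ 2
      ≤ Real.pi / 2 * 2 * (n : ℝ) ^ 2 := by gcongr
    _ ≤ 3 / 4 * Real.pi ^ 2 * (n : ℝ) ^ 2 :=
        mul_le_mul_of_nonneg_right (by nlinarith) (by positivity)
    _ ≤ 1 * ((n * Real.pi) ^ 2 - w ^ 2) := by linarith

lemma hasSum_cc {w : ℝ} (h0 : 0 < |w|) (h1 : |w| ≤ Real.pi / 2) {x : ℝ}
    (hx : x ∈ Set.Icc (0 : ℝ) 1) :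
    HasSum (fun n : ℤ => cc w n * Complex.exp (I * (n : ℂ) * (Real.pi : ℂ) * (x : ℂ)))
      (Complex.exp (I * (w : ℂ) * (x : ℂ))) := by
  let f : C(AddCircle (2 : ℝ), ℂ) := ⟨evenExt w, evenExt_continuous w⟩
  have hc : ∀ n, fourierCoeff f n = cc w n := fourierCoeff_evenExt h0 h1
  have hs : Summable (fourierCoeff f) := by
    refine Summable.of_norm_bounded_eventually (g := fun n : ℤ => 1 / (n : ℝ) ^ 2)
      (Real.summable_one_div_int_pow.2 one_lt_two) ?_
    filter_upwards [(Set.finite_singleton (0 : ℤ)).compl_mem_cofinite] with n hn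
    rw [hc]
    exact norm_cc_le h1 hn
  have h := has_pointwise_sum_fourier_series_of_summable hs (x : AddCircle (2 : ℝ))
  have hfx : f (x : AddCircle (2 : ℝ)) = Complex.exp (I * (w : ℂ) * (x : ℂ)) := by
    have := evenExt_apply w (x := x) ⟨by linarith [hx.1], hx.2⟩
    rwa [abs_of_nonneg hx.1] at this
  rw [hfx] at h
  convert! h using 2 with n
  rw [hc, smul_eq_mul, fourier_coe_apply]
  congr 2
  push_cast
  ring

/-- Passage from the symmetric range `-N ≤ n ≤ N` to pairs `n, -n`, in which `n = 0` occurs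
twice. -/
lemma sum_Icc_neg_add (F : ℤ → ℂ) (N : ℕ) :
    ∑ n ∈ Finset.Icc (-(N : ℤ)) N, F n + F 0
      = ∑ n ∈ Finset.range (N + 1), (F n + F (-(n : ℤ))) := by
  induction N with
  | zero => simp
  | succ N ih =>
    have h : Finset.Icc (-((N + 1 : ℕ) : ℤ)) ((N + 1 : ℕ) : ℤ)
        = insert ((N + 1 : ℕ) : ℤ) (insert (-((N + 1 : ℕ) : ℤ)) (Finset.Icc (-(N : ℤ)) N)) := by
      ext k
      simp only [Finset.mem_insert, Finset.mem_Icc]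
      omega
    rw [Finset.sum_range_succ, ← ih, h, Finset.sum_insert, Finset.sum_insert]
    · ring
    · simp
    · simp only [Finset.mem_insert, Finset.mem_Icc]
      omega

/-- The tail `∑_{n > N} 1/n²` is at most `1/N`. -/
lemma sum_norm_tail_le {h : ℕ → ℂ} (hh : ∀ n, n ≠ 0 → ‖h n‖ ≤ 2 / (n : ℝ) ^ 2) {N M : ℕ}
    (hN : N ≠ 0) (hM : N ≤ M) :
    ∑ n ∈ Finset.Ico (N + 1) (M + 1), ‖h n‖ ≤ 2 / N := by
  have key : ∑ n ∈ Finset.Ioc N M, ((n : ℝ) ^ 2)⁻¹ ≤ (N : ℝ)⁻¹ - (M : ℝ)⁻¹ :=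
    sum_Ioc_inv_sq_le_sub hN hM
  have hI : Finset.Ico (N + 1) (M + 1) = Finset.Ioc N M := by ext k; simp
  rw [hI]
  calc ∑ n ∈ Finset.Ioc N M, ‖h n‖ ≤ ∑ n ∈ Finset.Ioc N M, 2 * ((n : ℝ) ^ 2)⁻¹ := by
        refine Finset.sum_le_sum fun n hn => (hh n ?_).trans_eq (div_eq_mul_inv _ _)
        have := (Finset.mem_Ioc.1 hn).1
        omega
    _ = 2 * ∑ n ∈ Finset.Ioc N M, ((n : ℝ) ^ 2)⁻¹ := by rw [Finset.mul_sum]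
    _ ≤ 2 * (N : ℝ)⁻¹ := by
        have : 0 ≤ (M : ℝ)⁻¹ := by positivity
        linarith
    _ = 2 / N := (div_eq_mul_inv _ _).symm

/-- The weights `n/(N+1)` lost in the Cesàro mean turn `1/n²` into a harmonic sum. -/
lemma sum_norm_weighted_le {h : ℕ → ℂ} (hh : ∀ n, n ≠ 0 → ‖h n‖ ≤ 2 / (n : ℝ) ^ 2) {N : ℕ}
    (hN : N ≠ 0) :
    ∑ n ∈ Finset.range (N + 1), (n : ℝ) / (N + 1) * ‖h n‖ ≤ 2 * (1 + Real.log N) / N := by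
  have hN' : (0 : ℝ) < N := by positivity
  have hharm := harmonic_le_one_add_log N
  rw [harmonic] at hharm
  push_cast at hharm
  rw [Finset.sum_range_succ']
  simp only [Nat.cast_zero, zero_div, zero_mul, add_zero]
  calc ∑ n ∈ Finset.range N, ((n + 1 : ℕ) : ℝ) / (N + 1) * ‖h (n + 1)‖
      ≤ ∑ n ∈ Finset.range N, 2 / (N : ℝ) * ((n : ℝ) + 1)⁻¹ := by
        refine Finset.sum_le_sum fun n _ => ?_
        have h2 := hh (n + 1) (by omega)
        push_cast at h2 ⊢
        calc ((n : ℝ) + 1) / (N + 1) * ‖h (n + 1)‖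
            ≤ ((n : ℝ) + 1) / N * (2 / ((n : ℝ) + 1) ^ 2) := by
              gcongr
              linarith
          _ = 2 / (N : ℝ) * ((n : ℝ) + 1)⁻¹ := by field_simp
    _ = 2 / (N : ℝ) * ∑ n ∈ Finset.range N, ((n : ℝ) + 1)⁻¹ := by rw [Finset.mul_sum]
    _ ≤ 2 / (N : ℝ) * (1 + Real.log N) := by gcongr
    _ = 2 * (1 + Real.log N) / N := by ring

/-- Convergence rate of the Cesàro means: there is a constant `C > 0` such that for all `N ≥ 2`
and all `w` with `0 < |w| ≤ π/2`, `sup_{x∈[0,1]} |P_{N,w}(x) − e^{iwx}| ≤ C·(log N)/N`. -/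
theorem cesaro_error_rate :
    ∃ C : ℝ, 0 < C ∧
      ∀ (N : ℕ), 2 ≤ N →
        ∀ (w : ℝ), 0 < |w| → |w| ≤ Real.pi / 2 →
          ∀ x ∈ Set.Icc (0:ℝ) 1,
            ‖cesaro N w x - Complex.exp (I * (w : ℂ) * (x : ℂ))‖
              ≤ C * Real.log (N : ℝ) / (N : ℝ) := by
  refine ⟨8, by norm_num, fun N hN w h0 h1 x hx => ?_⟩
  have hN0 : N ≠ 0 := by omega
  have hNpos : (0 : ℝ) < N := by positivity
  set T : ℤ → ℂ := fun n => cc w n * Complex.exp (I * (n : ℂ) * (Real.pi : ℂ) * (x : ℂ)) with hT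
  set S := Complex.exp (I * (w : ℂ) * (x : ℂ)) with hS
  have hsum : HasSum T S := hasSum_cc h0 h1 hx
  have hTn : ∀ n : ℤ, n ≠ 0 → ‖T n‖ ≤ 1 / (n : ℝ) ^ 2 := by
    intro n hn
    have he : ‖Complex.exp (I * (n : ℂ) * (Real.pi : ℂ) * (x : ℂ))‖ = 1 := by
      rw [show I * (n : ℂ) * (Real.pi : ℂ) * (x : ℂ) = ((n * Real.pi * x : ℝ) : ℂ) * I by
        push_cast; ring, Complex.norm_exp_ofReal_mul_I]
    rw [hT]
    simp only [norm_mul, he, mul_one]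
    exact norm_cc_le h1 hn
  set h : ℕ → ℂ := fun n => T n + T (-(n : ℤ)) with hh
  have hhn : ∀ n, n ≠ 0 → ‖h n‖ ≤ 2 / (n : ℝ) ^ 2 := by
    intro n hn
    have a := hTn n (by exact_mod_cast hn)
    have b := hTn (-(n : ℤ)) (by simpa using hn)
    push_cast at a b
    rw [neg_sq] at b
    calc ‖h n‖ ≤ 1 / (n : ℝ) ^ 2 + 1 / (n : ℝ) ^ 2 := (norm_add_le _ _).trans (add_le_add a b)
      _ = 2 / (n : ℝ) ^ 2 := by ring
  -- In the pairing `n, -n` both sides carry the same extra term `T 0`.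
  have hces : cesaro N w x + T 0
      = ∑ n ∈ Finset.range (N + 1), ((1 - (n : ℝ) / (N + 1) : ℝ) : ℂ) * h n := by
    have hq : ((N : ℝ) + 1) ≠ 0 := by positivity
    have := sum_Icc_neg_add
      (fun n => ((((N : ℝ) + 1 - |(n : ℝ)|) / ((N : ℝ) + 1) : ℝ) : ℂ) * T n) N
    convert! this using 1
    · rw [cesaro]
      congr 1
      · refine Finset.sum_congr rfl fun n _ => ?_
        rw [hT, mul_assoc]
      · simp [div_self hq]
    · refine Finset.sum_congr rfl fun n _ => ?_
      rw [show 1 - (n : ℝ) / (N + 1) = ((N : ℝ) + 1 - n) / (N + 1) by field_simp]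
      simp only [hh, Int.cast_neg, abs_neg, Int.cast_natCast, Nat.abs_cast]
      ring
  have hlim : Filter.Tendsto (fun M : ℕ => ∑ n ∈ Finset.range (M + 1), h n) Filter.atTop
      (nhds (S + T 0)) :=
    hsum.nat_add_neg.tendsto_sum_nat.comp (Filter.tendsto_add_atTop_nat 1)
  have hbound : ∀ M : ℕ, N ≤ M →
      ‖cesaro N w x + T 0 - ∑ n ∈ Finset.range (M + 1), h n‖
        ≤ 2 * (1 + Real.log N) / N + 2 / N := by
    intro M hM
    rw [hces, ← Finset.sum_range_add_sum_Ico h (show N + 1 ≤ M + 1 by omega), ← sub_sub,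
      ← Finset.sum_sub_distrib]
    refine (norm_sub_le _ _).trans (add_le_add ?_ ?_)
    · refine (norm_sum_le _ _).trans (le_trans (Finset.sum_le_sum fun n _ => ?_)
        (sum_norm_weighted_le hhn hN0))
      have hw : (0 : ℝ) ≤ (n : ℝ) / (N + 1) := by positivity
      rw [show ((1 - (n : ℝ) / (N + 1) : ℝ) : ℂ) * h n - h n
        = -(((n : ℝ) / (N + 1) : ℝ) : ℂ) * h n by push_cast; ring, norm_mul, norm_neg,
        Complex.norm_real, Real.norm_of_nonneg hw]
    · exact (norm_sum_le _ _).trans (sum_norm_tail_le hhn hN0 hM)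
  have hle : ‖cesaro N w x + T 0 - (S + T 0)‖ ≤ 2 * (1 + Real.log N) / N + 2 / N :=
    le_of_tendsto (tendsto_const_nhds.sub hlim).norm
      (Filter.eventually_atTop.2 ⟨N, hbound⟩)
  rw [add_sub_add_right_eq_sub] at hle
  refine hle.trans ?_
  -- `log N ≥ log 2 > 2/3`, so the constant `4` is absorbed into `6 log N`.
  have hlog : 2 / 3 ≤ Real.log N := by
    have : Real.log 2 ≤ Real.log N := Real.log_le_log two_pos (by exact_mod_cast hN)
    linarith [Real.log_two_gt_d9]
  rw [← add_div]
  gcongr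
  linarith
end
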